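/- Classification of the stationary axisymmetric kernel (s = −2): If Φ : U → ℂ is smooth and satisfies ∂_r⁴ Φ = 0 and 𝒯₋₂ Φ = 0 everywhere on U = {(r,z) : r > r₊, −1 < z < 1}, then there exists a unique c = (c₁,…,c₈) ∈ ℂ⁸ such that Φ = Φ_Ker(c) on U. In particular, the space of smooth joint solutions of these two equations is exactly the 8-dimensional complex linear span of the eight functions appearing in Φ_Ker. -/

import Mathlib

noncomputable section

open ComplexConjugate Filter

namespace Kerr

/-- A point of the Boyer-Lindquist-type coordinate chart `(t, r, z, φ)`. -/
abbrev Pt := Fin 4 → ℝ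

/-- Partial derivative of a real-valued function on the chart. -/
def pd (i : Fin 4) (f : Pt → ℝ) (p : Pt) : ℝ :=
  fderiv ℝ f p (Pi.single i 1)

/-- Partial derivative of a complex-valued function on the chart. -/
def pdC (i : Fin 4) (f : Pt → ℂ) (p : Pt) : ℂ :=
  fderiv ℝ f p (Pi.single i 1)

/-- `Δ := r(r−2M)+a²` for the Kerr black hole with `M = 1`. -/
def Del (a r : ℝ) : ℝ := r * (r - 2) + a ^ 2

/-- `Σ := r² + a²z²`. -/
def Sig (a r z : ℝ) : ℝ := r ^ 2 + a ^ 2 * z ^ 2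

/-- Outer horizon radius `r₊ = 1 + √(1−a²)` (with `M = 1`). -/
def rplus (a : ℝ) : ℝ := 1 + Real.sqrt (1 - a ^ 2)

/-- Inner horizon radius `r₋ = 1 − √(1−a²)` (with `M = 1`). -/
def rminus (a : ℝ) : ℝ := 1 - Real.sqrt (1 - a ^ 2)

/-- The Kerr family of metrics, parametrized by mass `M` and angular momentum `J` (`a = J/M`),
in Boyer-Lindquist-type coordinates `(t,r,z,φ)`. -/
def gFam (M J : ℝ) (p : Pt) : Matrix (Fin 4) (Fin 4) ℝ :=
  Matrix.of
    ![![-(1 - 2 * M * p 1 / (p 1 ^ 2 + (J / M) ^ 2 * p 2 ^ 2)), 0, 0,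
        -(2 * M * (J / M) * p 1 * (1 - p 2 ^ 2) / (p 1 ^ 2 + (J / M) ^ 2 * p 2 ^ 2))],
      ![0, (p 1 ^ 2 + (J / M) ^ 2 * p 2 ^ 2) / (p 1 ^ 2 - 2 * M * p 1 + (J / M) ^ 2), 0, 0],
      ![0, 0, (p 1 ^ 2 + (J / M) ^ 2 * p 2 ^ 2) / (1 - p 2 ^ 2), 0],
      ![-(2 * M * (J / M) * p 1 * (1 - p 2 ^ 2) / (p 1 ^ 2 + (J / M) ^ 2 * p 2 ^ 2)), 0, 0,
        (1 - p 2 ^ 2) / (p 1 ^ 2 + (J / M) ^ 2 * p 2 ^ 2) *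
          (2 * (J / M) ^ 2 * M * p 1 * (1 - p 2 ^ 2)
            + ((J / M) ^ 2 + p 1 ^ 2) * (p 1 ^ 2 + (J / M) ^ 2 * p 2 ^ 2))]]

/-- The background Kerr metric with `M = 1` and spin `a`. -/
def g (a : ℝ) : Pt → Matrix (Fin 4) (Fin 4) ℝ := gFam 1 a

/-- Inverse Kerr metric. -/
def gInv (a : ℝ) (p : Pt) : Matrix (Fin 4) (Fin 4) ℝ := (g a p)⁻¹

/-- Christoffel symbols `Γ^l_{m n}` of the Kerr metric. -/
def Chr (a : ℝ) (l m n : Fin 4) (p : Pt) : ℝ :=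
  (1 / 2) * ∑ s : Fin 4, gInv a p l s *
    (pd m (fun q => g a q s n) p + pd n (fun q => g a q s m) p - pd s (fun q => g a q m n) p)

/-- Covariant derivative `(∇_c h)_{α β}` of a covariant 2-tensor field. -/
def covD2 (a : ℝ) (h : Pt → Matrix (Fin 4) (Fin 4) ℝ) (c α β : Fin 4) (p : Pt) : ℝ :=
  pd c (fun q => h q α β) p
    - ∑ s : Fin 4, Chr a s c α p * h p s β
    - ∑ s : Fin 4, Chr a s c β p * h p α s

/-- Covariant derivative `(∇_c T)_{α β γ}` of a covariant 3-tensor field. -/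
def covD3 (a : ℝ) (T : Fin 4 → Fin 4 → Fin 4 → Pt → ℝ) (c α β γ : Fin 4) (p : Pt) : ℝ :=
  pd c (fun q => T α β γ q) p
    - ∑ s : Fin 4, Chr a s c α p * T s β γ p
    - ∑ s : Fin 4, Chr a s c β p * T α s γ p
    - ∑ s : Fin 4, Chr a s c γ p * T α β s p

/-- The Killing vector `k = x ∂_t + y ∂_φ` of the Kerr background. -/
def kvec (x y : ℝ) : Fin 4 → ℝ := ![x, 0, 0, y]

/-- The lowered Killing covector `k_α`. -/
def kco (a x y : ℝ) (p : Pt) (α : Fin 4) : ℝ := ∑ s : Fin 4, g a p α s * kvec x y s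

/-- `∇_β k^λ` for the Killing vector `k = x ∂_t + y ∂_φ`. -/
def covDk (a x y : ℝ) (β l : Fin 4) (p : Pt) : ℝ :=
  pd β (fun _ => kvec x y l) p + ∑ s : Fin 4, Chr a l β s p * kvec x y s

/-- Trace-reversed metric perturbation `h̄_{αβ} = h_{αβ} − ½ g_{αβ} g^{λσ} h_{λσ}`. -/
def trRev (a : ℝ) (h : Pt → Matrix (Fin 4) (Fin 4) ℝ) (p : Pt) : Matrix (Fin 4) (Fin 4) ℝ :=
  Matrix.of fun α β =>
    h p α β - (1 / 2) * g a p α β * ∑ l : Fin 4, ∑ s : Fin 4, gInv a p l s * h p l s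

/-- Abbott–Deser 2-form `F_{αβ}[h, k]` (lowered indices) for the Killing vector
`k = x ∂_t + y ∂_φ`. -/
def ADform (a : ℝ) (h : Pt → Matrix (Fin 4) (Fin 4) ℝ) (x y : ℝ) (α β : Fin 4) (p : Pt) : ℝ :=
  (1 / (8 * Real.pi)) *
    ((1 / 2) * (∑ l : Fin 4, kvec x y l *
        (covD2 a (trRev a h) α β l p - covD2 a (trRev a h) β α l p))
    + (1 / 2) * (∑ l : Fin 4,
        (trRev a h p l α * covDk a x y β l p - trRev a h p l β * covDk a x y α l p))
    - (1 / 2) *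
        (kco a x y p α * ∑ l : Fin 4, ∑ s : Fin 4, gInv a p l s * covD2 a (trRev a h) s β l p
        - kco a x y p β * ∑ l : Fin 4, ∑ s : Fin 4, gInv a p l s * covD2 a (trRev a h) s α l p))

/-- Abbott–Deser 2-form with raised indices, `F^{αβ}[h,k]`. -/
def ADformUp (a : ℝ) (h : Pt → Matrix (Fin 4) (Fin 4) ℝ) (x y : ℝ) (α β : Fin 4) (p : Pt) : ℝ :=
  ∑ m : Fin 4, ∑ n : Fin 4, gInv a p α m * gInv a p β n * ADform a h x y m n p

/-- The Abbott–Deser charge density `ℱ[k] := Σ F^{rt}[h,k]`. -/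
def Fdens (a : ℝ) (h : Pt → Matrix (Fin 4) (Fin 4) ℝ) (x y : ℝ) (p : Pt) : ℝ :=
  Sig a (p 1) (p 2) * ADformUp a h x y 1 0 p

/-- The Abbott–Deser charge `Q[h, x∂_t + y∂_φ, S_{t,r}] = ∫₀^{2π}∫_{−1}^1 Σ F^{rt} dz dφ`. -/
def ADcharge (a : ℝ) (h : Pt → Matrix (Fin 4) (Fin 4) ℝ) (x y t r : ℝ) : ℝ :=
  ∫ φ in (0:ℝ)..(2 * Real.pi), ∫ z in (-1:ℝ)..(1:ℝ),
    Sig a r z * ADformUp a h x y 1 0 ![t, r, z, φ]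

/-! ### The Kinnersley tetrad and Newman-Penrose quantities -/

/-- The Newman–Penrose coefficient `ρ = −1/(r − i a z)`. -/
def rhoC (a : ℝ) (p : Pt) : ℂ := -1 / ((p 1 : ℂ) - Complex.I * (a : ℂ) * (p 2 : ℂ))

/-- Kinnersley tetrad leg `l^μ`. -/
def lvec (a : ℝ) (p : Pt) : Fin 4 → ℂ := fun i =>
  ((![(p 1 ^ 2 + a ^ 2) / Del a (p 1), 1, 0, a / Del a (p 1)] : Fin 4 → ℝ) i : ℂ)

/-- Kinnersley tetrad leg `n^μ`. -/
def nvec (a : ℝ) (p : Pt) : Fin 4 → ℂ := fun i =>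
  ((![(p 1 ^ 2 + a ^ 2) / (2 * Sig a (p 1) (p 2)), -Del a (p 1) / (2 * Sig a (p 1) (p 2)), 0,
      a / (2 * Sig a (p 1) (p 2))] : Fin 4 → ℝ) i : ℂ)

/-- Kinnersley tetrad leg `m^μ`. -/
def mvec (a : ℝ) (p : Pt) : Fin 4 → ℂ := fun i =>
  (-(conj (rhoC a p)) * (Real.sqrt (1 - p 2 ^ 2) : ℂ) / (Real.sqrt 2 : ℂ)) *
    (![Complex.I * (a : ℂ), 0, -1, Complex.I / (1 - (p 2 : ℂ) ^ 2)] i)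

/-- Kinnersley tetrad leg `m̄^μ`. -/
def mbvec (a : ℝ) (p : Pt) : Fin 4 → ℂ := fun i => conj (mvec a p i)

/-- Lowered tetrad covector `l_μ`. -/
def lco (a : ℝ) (p : Pt) (i : Fin 4) : ℂ := ∑ j : Fin 4, (g a p i j : ℂ) * lvec a p j

/-- Lowered tetrad covector `n_μ`. -/
def nco (a : ℝ) (p : Pt) (i : Fin 4) : ℂ := ∑ j : Fin 4, (g a p i j : ℂ) * nvec a p j

/-- Lowered tetrad covector `m_μ`. -/
def mco (a : ℝ) (p : Pt) (i : Fin 4) : ℂ := ∑ j : Fin 4, (g a p i j : ℂ) * mvec a p j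

/-- Lowered tetrad covector `m̄_μ`. -/
def mbco (a : ℝ) (p : Pt) (i : Fin 4) : ℂ := ∑ j : Fin 4, (g a p i j : ℂ) * mbvec a p j

/-- Newman–Penrose spin coefficient `μ = ρ²ρ̄Δ/2`. -/
def muNP (a : ℝ) (p : Pt) : ℂ := rhoC a p ^ 2 * conj (rhoC a p) * (Del a (p 1) : ℂ) / 2

/-- Newman–Penrose spin coefficient `τ = −iaρρ̄√(1−z²)/√2`. -/
def tauNP (a : ℝ) (p : Pt) : ℂ :=
  -Complex.I * (a : ℂ) * rhoC a p * conj (rhoC a p) * (Real.sqrt (1 - p 2 ^ 2) : ℂ)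
    / (Real.sqrt 2 : ℂ)

/-- Newman–Penrose spin coefficient `π = iaρ²√(1−z²)/√2`. -/
def piNP (a : ℝ) (p : Pt) : ℂ :=
  Complex.I * (a : ℂ) * rhoC a p ^ 2 * (Real.sqrt (1 - p 2 ^ 2) : ℂ) / (Real.sqrt 2 : ℂ)

/-- Newman–Penrose spin coefficient `γ = μ + ρρ̄(r−1)/2`. -/
def gamNP (a : ℝ) (p : Pt) : ℂ :=
  muNP a p + rhoC a p * conj (rhoC a p) * ((p 1 : ℂ) - 1) / 2

/-- Newman–Penrose spin coefficient `β = −ρ̄z/(2√2√(1−z²))`. -/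
def betNP (a : ℝ) (p : Pt) : ℂ :=
  -(conj (rhoC a p)) * (p 2 : ℂ) / (2 * (Real.sqrt 2 : ℂ) * (Real.sqrt (1 - p 2 ^ 2) : ℂ))

/-- Newman–Penrose spin coefficient `α = π − β̄`. -/
def alpNP (a : ℝ) (p : Pt) : ℂ := piNP a p - conj (betNP a p)

/-- Directional derivative along a (complex) vector field. -/
def dirD (v : Pt → Fin 4 → ℂ) (f : Pt → ℂ) (p : Pt) : ℂ := ∑ i : Fin 4, v p i * pdC i f p

/-- First-order operator `(v^μ ∂_μ + c)` acting on complex scalars. -/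
def opD (v : Pt → Fin 4 → ℂ) (c : Pt → ℂ) (f : Pt → ℂ) : Pt → ℂ :=
  fun p => dirD v f p + c p * f p

/-- The CCK operator `₊₂Ĥ_{μν}` applied to a Hertz potential `Φ`. -/
def Hplus (a : ℝ) (Φ : Pt → ℂ) (p : Pt) (i j : Fin 4) : ℂ :=
  -(rhoC a p) ^ (-4 : ℤ) *
    (lco a p i * lco a p j *
        opD (mbvec a) (fun q => -3 * alpNP a q - conj (betNP a q) + 5 * piNP a q)
          (opD (mbvec a) (fun q => -4 * alpNP a q + piNP a q) Φ) p
    + mco a p i * mco a p j *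
        opD (nvec a) (fun q => 5 * muNP a q - 3 * gamNP a q + conj (gamNP a q))
          (opD (nvec a) (fun q => muNP a q - 4 * gamNP a q) Φ) p
    - (1 / 2) * (lco a p i * mco a p j + lco a p j * mco a p i) *
        (opD (mbvec a)
            (fun q => -3 * alpNP a q + conj (betNP a q) + 5 * piNP a q + conj (tauNP a q))
            (opD (nvec a) (fun q => muNP a q - 4 * gamNP a q) Φ) p
        + opD (nvec a)
            (fun q => 5 * muNP a q - conj (muNP a q) - 3 * gamNP a q - conj (gamNP a q))
            (opD (mbvec a) (fun q => -4 * alpNP a q + piNP a q) Φ) p))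

/-- The CCK operator `₋₂Ĥ_{μν}` applied to a Hertz potential `Φ`. -/
def Hminus (a : ℝ) (Φ : Pt → ℂ) (p : Pt) (i j : Fin 4) : ℂ :=
  -(nco a p i * nco a p j *
        opD (mvec a) (fun q => conj (alpNP a q) + 3 * betNP a q - tauNP a q)
          (opD (mvec a) (fun q => 4 * betNP a q + 3 * tauNP a q) Φ) p
    + mbco a p i * mbco a p j *
        opD (lvec a) (fun q => -(rhoC a q))
          (opD (lvec a) (fun q => 3 * rhoC a q) Φ) p
    - (1 / 2) * (nco a p i * mbco a p j + nco a p j * mbco a p i) *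
        (opD (mvec a) (fun q => -2 * conj (alpNP a q) + 2 * betNP a q - tauNP a q)
            (opD (lvec a) (fun q => 3 * rhoC a q) Φ) p
        + opD (lvec a) (fun q => conj (rhoC a q) - rhoC a q)
            (opD (mvec a) (fun q => 4 * betNP a q + 3 * tauNP a q) Φ) p))

/-- `ₛĤ_{μν} Φ` for `s = ±2`. -/
def Hop (a : ℝ) (s : ℤ) (Φ : Pt → ℂ) (p : Pt) (i j : Fin 4) : ℂ :=
  if s = 2 then Hplus a Φ p i j else Hminus a Φ p i j

/-- The CCK metric perturbation `h^{CCK}[s,Φ]_{μν} := ₛĤ_{μν}Φ + c.c.`. -/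
def hCCK (a : ℝ) (s : ℤ) (Φ : Pt → ℂ) (p : Pt) : Matrix (Fin 4) (Fin 4) ℝ :=
  Matrix.of fun i j => (Hop a s Φ p i j + conj (Hop a s Φ p i j)).re

/-- The homogeneous spin-`s` Teukolsky operator on the Kerr exterior. -/
def Teuk (a : ℝ) (s : ℤ) (Φ : Pt → ℂ) (p : Pt) : ℂ :=
  -((((p 1 : ℂ) ^ 2 + (a : ℂ) ^ 2) ^ 2 / (Del a (p 1) : ℂ)
      - (a : ℂ) ^ 2 * (1 - (p 2 : ℂ) ^ 2)) * pdC 0 (pdC 0 Φ) p)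
  - (4 * (a : ℂ) * (p 1 : ℂ) / (Del a (p 1) : ℂ)) * pdC 0 (pdC 3 Φ) p
  - ((a : ℂ) ^ 2 / (Del a (p 1) : ℂ) - 1 / (1 - (p 2 : ℂ) ^ 2)) * pdC 3 (pdC 3 Φ) p
  + 2 * (s : ℂ) * (((p 1 : ℂ) ^ 2 - (a : ℂ) ^ 2) / (Del a (p 1) : ℂ) - (p 1 : ℂ)
      - Complex.I * (a : ℂ) * (p 2 : ℂ)) * pdC 0 Φ p
  + 2 * (s : ℂ) * ((a : ℂ) * ((p 1 : ℂ) - 1) / (Del a (p 1) : ℂ)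
      + Complex.I * (p 2 : ℂ) / (1 - (p 2 : ℂ) ^ 2)) * pdC 3 Φ p
  + (Del a (p 1) : ℂ) ^ (-s) *
      pdC 1 (fun q => (Del a (q 1) : ℂ) ^ (s + 1) * pdC 1 Φ q) p
  + pdC 2 (fun q => (1 - (q 2 : ℂ) ^ 2) * pdC 2 Φ q) p
  - (((s : ℂ) * ((s : ℂ) + 1) * (p 2 : ℂ) ^ 2 - (s : ℂ)) / (1 - (p 2 : ℂ) ^ 2)) * Φ p

/-- The exterior Kerr coordinate patch `{r > r₊, −1 < z < 1}`. -/
def ext (a : ℝ) : Set Pt := {p | rplus a < p 1 ∧ -1 < p 2 ∧ p 2 < 1}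

/-- The closed exterior patch `{r > r₊, −1 ≤ z ≤ 1}`. -/
def extCl (a : ℝ) : Set Pt := {p | rplus a < p 1 ∧ -1 ≤ p 2 ∧ p 2 ≤ 1}

/-- A Fourier mode Hertz potential `Φ(t,r,z,φ) = ψ(r,z) e^{i(mφ − ωt)}`. -/
def fourierMode (m : ℤ) (ω : ℝ) (ψ : ℝ → ℝ → ℂ) : Pt → ℂ :=
  fun p => ψ (p 1) (p 2) * Complex.exp (Complex.I * ((m : ℂ) * (p 3 : ℂ) - (ω : ℂ) * (p 0 : ℂ)))

/-- The 2D domain `U = {(r,z) : r > r₊, −1 < z < 1}`. -/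
def U2 (a : ℝ) : Set (ℝ × ℝ) := {q | rplus a < q.1 ∧ -1 < q.2 ∧ q.2 < 1}

/-- The closed 2D domain `{(r,z) : r > r₊, −1 ≤ z ≤ 1}`. -/
def U2cl (a : ℝ) : Set (ℝ × ℝ) := {q | rplus a < q.1 ∧ -1 ≤ q.2 ∧ q.2 ≤ 1}

/-- `∂_r` of a function of `(r, z)`. -/
def pdr2 (f : ℝ → ℝ → ℂ) : ℝ → ℝ → ℂ := fun r z => deriv (fun r' => f r' z) r

/-- `∂_z` of a function of `(r, z)`. -/
def pdz2 (f : ℝ → ℝ → ℂ) : ℝ → ℝ → ℂ := fun r z => deriv (fun z' => f r z') z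

/-- The stationary axisymmetric spin-`s` Teukolsky operator
`𝒯_s Φ := Δ^{−s}∂_r(Δ^{s+1}∂_rΦ) + ∂_z((1−z²)∂_zΦ) − ((s(s+1)z²−s)/(1−z²))Φ`. -/
def TeukSAS (a : ℝ) (s : ℤ) (ψ : ℝ → ℝ → ℂ) (r z : ℝ) : ℂ :=
  (Del a r : ℂ) ^ (-s) *
      deriv (fun r' => (Del a r' : ℂ) ^ (s + 1) * deriv (fun r'' => ψ r'' z) r') r
    + deriv (fun z' => ((1 - z' ^ 2 : ℝ) : ℂ) * deriv (fun z'' => ψ r z'') z') z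
    - (((s : ℂ) * ((s : ℂ) + 1) * (z : ℂ) ^ 2 - (s : ℂ)) / (1 - (z : ℂ) ^ 2)) * ψ r z


/-- The mass perturbation `h_M := ∂g^{Kerr}/∂M` at `M = 1`, `J = a`. -/
def hM (a : ℝ) (p : Pt) : Matrix (Fin 4) (Fin 4) ℝ :=
  Matrix.of fun i j => deriv (fun M => gFam M a p i j) 1

/-- The angular-momentum perturbation `h_J := ∂g^{Kerr}/∂J` at `M = 1`, `J = a`. -/
def hJ (a : ℝ) (p : Pt) : Matrix (Fin 4) (Fin 4) ℝ :=
  Matrix.of fun i j => deriv (fun J => gFam 1 J p i j) a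

/-- The eight-parameter family `Φ_Ker(c)` of stationary axisymmetric kernel elements
(`c 0, ..., c 7` correspond to `c₁, ..., c₈`). -/
def PhiKer (a : ℝ) (c : Fin 8 → ℂ) (r z : ℝ) : ℂ :=
  (1 - (z : ℂ) ^ 2)⁻¹ *
    (c 0
    + c 1 * ((r : ℂ) - 1) * (z : ℂ)
    + c 2 * (z : ℂ) * ((z : ℂ) ^ 2 - 3)
    + c 3 * ((r : ℂ) + ((r : ℂ) - 1) * (z : ℂ) ^ 2)
    + c 4 * ((r : ℂ) ^ 2 - (a : ℂ) ^ 2) * (z : ℂ)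
    + c 5 * (r : ℂ) * ((r : ℂ) * ((r : ℂ) - 3) + 3 * (a : ℂ) ^ 2)
    + c 6 * ((r : ℂ) ^ 2 + ((r : ℂ) ^ 2 - (a : ℂ) ^ 2) * (z : ℂ) ^ 2)
    + c 7 * (r : ℂ) * (z : ℂ) *
        (((r : ℂ) * ((r : ℂ) - 3) + 3 * (a : ℂ) ^ 2) * (z : ℂ) ^ 2
          - 3 * ((r : ℂ) * ((r : ℂ) + 4) - 4 * (a : ℂ) ^ 2)))

/-- `G(z) = −4(1−a²)r₊z(1−z²)/(2z² + r₊(1−z²))²`. -/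
def Gfun (a z : ℝ) : ℝ :=
  -4 * (1 - a ^ 2) * rplus a * z * (1 - z ^ 2) / (2 * z ^ 2 + rplus a * (1 - z ^ 2)) ^ 2

/-- Outward Abbott–Deser flux through the closed surface `C_ε⁺` around the segment
`r₁ ≤ r ≤ r₂` of the axis `z = 1`, in the slice `t = t₀`: two caps at `r = r₁, r₂`
and the tube at `z = 1 − ε`. -/
def axisFluxP (a : ℝ) (h : Pt → Matrix (Fin 4) (Fin 4) ℝ) (x y t r₁ r₂ ε : ℝ) : ℝ :=
  (∫ φ in (0:ℝ)..(2 * Real.pi), ∫ z in (1 - ε)..(1:ℝ),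
      Sig a r₂ z * ADformUp a h x y 1 0 ![t, r₂, z, φ])
  - (∫ φ in (0:ℝ)..(2 * Real.pi), ∫ z in (1 - ε)..(1:ℝ),
      Sig a r₁ z * ADformUp a h x y 1 0 ![t, r₁, z, φ])
  - (∫ φ in (0:ℝ)..(2 * Real.pi), ∫ r in r₁..r₂,
      Sig a r (1 - ε) * ADformUp a h x y 2 0 ![t, r, 1 - ε, φ])

/-- Outward Abbott–Deser flux through the closed surface `C_ε⁻` around the segment
`r₁ ≤ r ≤ r₂` of the axis `z = −1`. -/
def axisFluxM (a : ℝ) (h : Pt → Matrix (Fin 4) (Fin 4) ℝ) (x y t r₁ r₂ ε : ℝ) : ℝ :=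
  (∫ φ in (0:ℝ)..(2 * Real.pi), ∫ z in (-1:ℝ)..(-1 + ε),
      Sig a r₂ z * ADformUp a h x y 1 0 ![t, r₂, z, φ])
  - (∫ φ in (0:ℝ)..(2 * Real.pi), ∫ z in (-1:ℝ)..(-1 + ε),
      Sig a r₁ z * ADformUp a h x y 1 0 ![t, r₁, z, φ])
  + (∫ φ in (0:ℝ)..(2 * Real.pi), ∫ r in r₁..r₂,
      Sig a r (-1 + ε) * ADformUp a h x y 2 0 ![t, r, -1 + ε, φ])

/-- The statement that both limiting Abbott–Deser axis charges
`Q_axis^± [h, x∂_t + y∂_φ, r₁, r₂]` vanish. -/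
def axisChargesVanish (a : ℝ) (h : Pt → Matrix (Fin 4) (Fin 4) ℝ) : Prop :=
  ∀ x y t r₁ r₂ : ℝ, rplus a < r₁ → r₁ < r₂ →
    Tendsto (fun ε => axisFluxP a h x y t r₁ r₂ ε) (nhdsWithin 0 (Set.Ioi 0)) (nhds 0) ∧
    Tendsto (fun ε => axisFluxM a h x y t r₁ r₂ ε) (nhdsWithin 0 (Set.Ioi 0)) (nhds 0)

/-- Covariant Hessian `∇_α ∇_β f` of a scalar field. -/
def hess (a : ℝ) (f : Pt → ℝ) (α β : Fin 4) (p : Pt) : ℝ :=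
  pd α (fun q => pd β f q) p - ∑ s : Fin 4, Chr a s α β p * pd s f p

/-- The linearized Ricci tensor
`δR_{αβ}[h] = −½∇^λ∇_λ h_{αβ} − ½∇_α∇_β(g^{λσ}h_{λσ}) + ∇^λ∇_{(α}h_{β)λ}`. -/
def linRicci (a : ℝ) (h : Pt → Matrix (Fin 4) (Fin 4) ℝ) (α β : Fin 4) (p : Pt) : ℝ :=
  -(1 / 2) * (∑ l : Fin 4, ∑ s : Fin 4, gInv a p l s * covD3 a (covD2 a h) l s α β p)
  - (1 / 2) * hess a (fun q => ∑ l : Fin 4, ∑ s : Fin 4, gInv a q l s * h q l s) α β p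
  + (1 / 2) * ((∑ l : Fin 4, ∑ s : Fin 4, gInv a p l s * covD3 a (covD2 a h) s α β l p)
      + (∑ l : Fin 4, ∑ s : Fin 4, gInv a p l s * covD3 a (covD2 a h) s β α l p))

/-!
Multiplication by `1 − z²` removes the potential: `u = (1 − z²) Φ` satisfies
`(1 − z²) 𝒯₋₂ Φ = (Δ ∂_r² − 2 (r − 1) ∂_r) u + ((1 − z²) ∂_z² + 2 z ∂_z) u`, and the variables
separate. By `∂_r⁴ u = 0`, `u` is a cubic in `r`; Lagrange interpolation at four radii shows that
its coefficients are as smooth in `z` as `u`. The radial operator is diagonalizable on cubics, with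
eigenvalues `0, −2, −2, 0`, so in an eigenbasis each coefficient `g` solves
`(1 − z²) g'' + 2 z g' = λ g` with `λ ∈ {0, 2}`. The first integrals `g' / (1 − z²)` for `λ = 0` and
`(g − z g') / (1 − z²)` for `λ = 2` give two polynomial solutions for each `λ`, hence `4 · 2 = 8`
constants in all.
-/

open Set Polynomial
open scoped Topology

theorem exists_forall_eq_of_hasDerivAt_zero {𝕜 E : Type*} [RCLike 𝕜] [NormedAddCommGroup E]
    [NormedSpace 𝕜 E] {s : Set 𝕜} (hs : IsOpen s) (hs' : IsPreconnected s) {f : 𝕜 → E}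
    (hf : ∀ x ∈ s, HasDerivAt f 0 x) : ∃ c, ∀ x ∈ s, f x = c :=
  hs.exists_is_const_of_deriv_eq_zero hs'
    (fun x hx => (hf x hx).differentiableAt.differentiableWithinAt) fun x hx => (hf x hx).deriv

theorem exists_eq_sum_pow_smul_of_iteratedDeriv_eq_zero {𝕜 E : Type*} [RCLike 𝕜]
    [NormedAddCommGroup E] [NormedSpace 𝕜 E] {s : Set 𝕜} (hs : IsOpen s) (hs' : IsPreconnected s)
    {n : ℕ} {f : 𝕜 → E} (hf : ContDiffOn 𝕜 n f s) (hf' : s.EqOn (iteratedDeriv n f) 0) :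
    ∃ c : ℕ → E, ∀ x ∈ s, f x = ∑ k ∈ Finset.range n, x ^ k • c k := by
  induction n generalizing f with
  | zero => exact ⟨0, fun x hx => by simpa using hf' hx⟩
  | succ n ih =>
    obtain ⟨c, hc⟩ := ih (hf.deriv_of_isOpen hs (by simp)) (by rwa [← iteratedDeriv_succ'])
    have hfd : ∀ x ∈ s, HasDerivAt f (deriv f x) x := fun x hx =>
      ((hf.differentiableOn (by simp)).differentiableAt (hs.mem_nhds hx)).hasDerivAt
    let p : 𝕜 → E := fun x => ∑ k ∈ Finset.range n, x ^ (k + 1) • ((k + 1 : 𝕜)⁻¹ • c k)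
    have hp : ∀ x ∈ s, HasDerivAt p (deriv f x) x := by
      intro x hx
      rw [hc x hx]
      refine HasDerivAt.fun_sum fun k _ => ?_
      convert (hasDerivAt_pow (k + 1) x).smul_const ((k + 1 : 𝕜)⁻¹ • c k) using 1
      have : (k + 1 : 𝕜) ≠ 0 := Nat.cast_add_one_ne_zero k
      rw [smul_smul]
      congr 1
      push_cast
      field_simp
    obtain ⟨c₀, hc₀⟩ := exists_forall_eq_of_hasDerivAt_zero hs hs' fun x hx =>
      ((hfd x hx).fun_sub (hp x hx)).congr_deriv (sub_self _)
    refine ⟨fun k => k.casesOn c₀ fun k => (k + 1 : 𝕜)⁻¹ • c k, fun x hx => ?_⟩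
    rw [Finset.sum_range_succ', ← sub_eq_iff_eq_add']
    simpa [p] using hc₀ x hx

theorem sum_eval_lagrangeBasis_smul_sum_pow {F E : Type*} [Field F] [AddCommGroup E] [Module F E]
    [DecidableEq F] (t : Finset F) (c : ℕ → E) (r : F) :
    ∑ x ∈ t, (Lagrange.basis t id x).eval r • ∑ k ∈ Finset.range t.card, x ^ k • c k =
      ∑ k ∈ Finset.range t.card, r ^ k • c k := by
  have hpow : ∀ k ∈ Finset.range t.card,
      ∑ x ∈ t, (Lagrange.basis t id x).eval r * x ^ k = r ^ k := by
    intro k hk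
    have hdeg : (X ^ k : F[X]).degree < t.card := by
      simpa using Finset.mem_range.mp hk
    have := congr_arg (eval r) (Lagrange.eq_interpolate (Set.injOn_id (t : Set F)) hdeg)
    simpa [Lagrange.interpolate_apply, eval_finsetSum, mul_comm] using this.symm
  simp_rw [Finset.smul_sum, smul_smul]
  rw [Finset.sum_comm]
  refine Finset.sum_congr rfl fun k hk => ?_
  rw [← Finset.sum_smul, hpow k hk]

theorem eq_sum_eval_lagrangeBasis_smul_of_iteratedDeriv_eq_zero {𝕜 E : Type*} [RCLike 𝕜]
    [NormedAddCommGroup E] [NormedSpace 𝕜 E] [DecidableEq 𝕜] {s : Set 𝕜} (hs : IsOpen s)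
    (hs' : IsPreconnected s) {t : Finset 𝕜} (ht : ↑t ⊆ s) {f : 𝕜 → E}
    (hf : ContDiffOn 𝕜 t.card f s) (hf' : s.EqOn (iteratedDeriv t.card f) 0) {r : 𝕜} (hr : r ∈ s) :
    f r = ∑ x ∈ t, (Lagrange.basis t id x).eval r • f x := by
  obtain ⟨c, hc⟩ := exists_eq_sum_pow_smul_of_iteratedDeriv_eq_zero hs hs' hf hf'
  rw [hc r hr, ← sum_eval_lagrangeBasis_smul_sum_pow]
  exact Finset.sum_congr rfl fun x hx => by rw [hc x (ht hx)]

theorem eq_zero_of_sum_eval_smul_eq_zero {K E ι : Type*} [Field K] [AddCommGroup E] [Module K E]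
    [Fintype ι] {P : ι → K[X]} (hP : LinearIndependent K P) {s : Set K} (hs : s.Infinite)
    {b : ι → E} (hb : ∀ x ∈ s, ∑ i, (P i).eval x • b i = 0) (i : ι) : b i = 0 := by
  rw [← Module.forall_dual_apply_eq_zero_iff K]
  intro φ
  refine Fintype.linearIndependent_iff.mp hP (fun i => φ (b i)) ?_ i
  refine eq_zero_of_infinite_isRoot _ (hs.mono fun x hx => ?_)
  have := congr_arg φ (hb x hx)
  simpa [eval_finsetSum, mul_comm] using this

section SecondOrder

theorem hasDerivAt_deriv_of_contDiffAt {𝕜 E : Type*} [NontriviallyNormedField 𝕜]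
    [NormedAddCommGroup E] [NormedSpace 𝕜 E] {g : 𝕜 → E} {x : 𝕜} (hg : ContDiffAt 𝕜 2 g x) :
    HasDerivAt (deriv g) (iteratedDeriv 2 g x) x := by
  rw [iteratedDeriv_succ, iteratedDeriv_one]
  have hfderiv : ContDiffAt 𝕜 1 (fderiv 𝕜 g) x := hg.fderiv_right (by norm_num)
  exact ((hfderiv.differentiableAt one_ne_zero).clm_apply (differentiableAt_const 1)).hasDerivAt

variable {E : Type*} [NormedAddCommGroup E] [NormedSpace ℝ E]

/-- The second-order differential operator `f ↦ p f'' + q f'`. -/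
def secondOrderOp (p q : ℝ → ℝ) (f : ℝ → E) (x : ℝ) : E :=
  p x • iteratedDeriv 2 f x + q x • deriv f x

variable {x : ℝ} (p q : ℝ → ℝ)

theorem secondOrderOp_congr {f g : ℝ → E} (h : f =ᶠ[𝓝 x] g) :
    secondOrderOp p q f x = secondOrderOp p q g x := by
  rw [secondOrderOp, secondOrderOp, h.iteratedDeriv_eq, h.deriv_eq]

theorem secondOrderOp_sum {ι : Type*} [Fintype ι] {f : ι → ℝ → E}
    (hf : ∀ i, ContDiffAt ℝ 2 (f i) x) :
    secondOrderOp p q (fun y => ∑ i, f i y) x = ∑ i, secondOrderOp p q (f i) x := by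
  simp only [secondOrderOp]
  rw [iteratedDeriv_fun_sum fun i _ => hf i,
    deriv_fun_sum fun i _ => (hf i).differentiableAt two_ne_zero]
  simp only [Finset.smul_sum, Finset.sum_add_distrib]

theorem secondOrderOp_const_smul (c : ℝ) (f : ℝ → E) :
    secondOrderOp p q (fun y => c • f y) x = c • secondOrderOp p q f x := by
  simp only [secondOrderOp, iteratedDeriv_fun_const_smul_field, deriv_fun_const_smul_field,
    smul_add, smul_comm c]

theorem secondOrderOp_smul_const {f : ℝ → ℝ} (hf : ContDiffAt ℝ 2 f x) (v : E) :
    secondOrderOp p q (fun y => f y • v) x = secondOrderOp p q f x • v := by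
  simp only [secondOrderOp, iteratedDeriv_smul_const hf,
    deriv_smul_const (hf.differentiableAt two_ne_zero), smul_eq_mul, add_smul, mul_smul]

theorem secondOrderOp_eval (P : ℝ[X]) :
    secondOrderOp p q (fun y => P.eval y) x =
      p x * P.derivative.derivative.eval x + q x * P.derivative.eval x := by
  have hderiv (Q : ℝ[X]) : deriv (fun y => Q.eval y) = fun y => Q.derivative.eval y :=
    funext fun _ => Q.deriv
  simp only [secondOrderOp, iteratedDeriv_succ, iteratedDeriv_zero, hderiv, smul_eq_mul]

end SecondOrder

section Separation

variable {E : Type*} [NormedAddCommGroup E] [NormedSpace ℝ E]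

/-- The radial operator `f ↦ Δ^{−s} ∂_r(Δ^{s+1} ∂_r f)` of spin `s`, with the derivative
of the inner power of `Δ` carried out so that no powers remain. -/
def radialOp (a : ℝ) (s : ℤ) : (ℝ → E) → ℝ → E :=
  secondOrderOp (Del a) fun r => 2 * (s + 1) * (r - 1)

/-- The angular operator `g ↦ (1 − z²) g'' + 2z g'` to which the angular part of the spin `−2`
Teukolsky operator is conjugate by the weight `1 − z²`. -/
def angularOp : (ℝ → E) → ℝ → E :=
  secondOrderOp (fun z => 1 - z ^ 2) fun z => 2 * z

theorem hasDerivAt_Del (a r : ℝ) : HasDerivAt (Del a) (2 * (r - 1)) r :=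
  (((hasDerivAt_id' r).fun_mul ((hasDerivAt_id' r).sub_const 2)).add_const (a ^ 2)).congr_deriv
    (by ring)

theorem Del_pos {a r : ℝ} (hr : rplus a < r) : 0 < Del a r := by
  have := Real.lt_sq_of_sqrt_lt (lt_sub_iff_add_lt'.mpr hr)
  unfold Del
  linarith

theorem zpow_mul_deriv_zpow_mul_deriv {a r : ℝ} (hr : Del a r ≠ 0) (s : ℤ) {f : ℝ → ℂ}
    (hf : ContDiffAt ℝ 2 f r) :
    (Del a r : ℂ) ^ (-s) * deriv (fun r' => (Del a r' : ℂ) ^ (s + 1) * deriv f r') r =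
      radialOp a s f r := by
  have hΔ : (Del a r : ℂ) ≠ 0 := Complex.ofReal_ne_zero.mpr hr
  have hzpow : HasDerivAt (fun r' => (Del a r' : ℂ) ^ (s + 1))
      (((s + 1 : ℤ) : ℂ) * (Del a r : ℂ) ^ s * ((2 * (r - 1) : ℝ) : ℂ)) r := by
    have := (hasDerivAt_zpow (s + 1) (Del a r : ℂ) (Or.inl hΔ)).comp r
      (hasDerivAt_Del a r).ofReal_comp
    rwa [add_sub_cancel_right] at this
  rw [(hzpow.fun_mul (hasDerivAt_deriv_of_contDiffAt hf)).deriv, zpow_add_one₀ hΔ, zpow_neg]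
  have hΔs : (Del a r : ℂ) ^ s ≠ 0 := zpow_ne_zero s hΔ
  simp only [radialOp, secondOrderOp, Complex.real_smul]
  push_cast
  field_simp
  ring

theorem angularOp_one_sub_sq_smul {z : ℝ} {f : ℝ → E} (hf : ContDiffAt ℝ 2 f z) :
    angularOp (fun z' => (1 - z' ^ 2) • f z') z =
      (1 - z ^ 2) • deriv (fun z' => (1 - z' ^ 2) • deriv f z') z - (2 * z ^ 2 + 2) • f z := by
  have hw : ∀ y : ℝ, HasDerivAt (fun y => 1 - y ^ 2) (-(2 * y)) y := fun y => by
    simpa using (hasDerivAt_pow 2 y).const_sub 1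
  have hu : deriv (fun y => (1 - y ^ 2) • f y) =ᶠ[𝓝 z]
      fun y => (1 - y ^ 2) • deriv f y + (-(2 * y)) • f y := by
    filter_upwards [hf.eventually (by simp)] with y hy
    exact ((hw y).smul (hy.differentiableAt two_ne_zero).hasDerivAt).deriv
  have hwf' := (hw z).fun_smul (hasDerivAt_deriv_of_contDiffAt hf)
  have hzf := ((hasDerivAt_id' z).const_mul 2).fun_neg.fun_smul
    (hf.differentiableAt two_ne_zero).hasDerivAt
  rw [angularOp, secondOrderOp, iteratedDeriv_succ, iteratedDeriv_one, hu.deriv_eq,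
    (hwf'.fun_add hzf).deriv, hu.self_of_nhds, hwf'.deriv]
  module

theorem one_sub_sq_smul_TeukSAS {a r z : ℝ} (hr : Del a r ≠ 0) (hz : z ^ 2 ≠ 1) {Φ : ℝ → ℝ → ℂ}
    (hΦr : ContDiffAt ℝ 2 (fun r' => Φ r' z) r) (hΦz : ContDiffAt ℝ 2 (Φ r) z) :
    (1 - z ^ 2) • TeukSAS a (-2) Φ r z =
      radialOp a (-2) (fun r' => (1 - z ^ 2) • Φ r' z) r +
        angularOp (fun z' => (1 - z' ^ 2) • Φ r z') z := by
  have hw : (1 - (z : ℂ) ^ 2) ≠ 0 := sub_ne_zero.mpr fun h => hz (by exact_mod_cast h.symm)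
  rw [radialOp, secondOrderOp_const_smul, ← radialOp, ← zpow_mul_deriv_zpow_mul_deriv hr _ hΦr,
    angularOp_one_sub_sq_smul hΦz]
  simp only [TeukSAS, Complex.real_smul]
  push_cast
  field_simp
  ring

/-- The eigenfunctions, among the polynomials of degree less than four, of the radial operator of
spin `−2`. -/
def radialMode (a : ℝ) : Fin 4 → ℝ[X] :=
  ![1, X - 1, X ^ 2 - C (a ^ 2), X ^ 3 - C 3 * X ^ 2 + C (3 * a ^ 2) * X]

/-- The separation constants: `radialMode a k` has eigenvalue `−separationConst k` for the radial
operator, so its coefficient is an eigenfunction of the angular one for `separationConst k`. -/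
def separationConst : Fin 4 → ℝ :=
  ![0, 2, 2, 0]

/-- Two independent eigenfunctions of the angular operator for each separation constant. -/
def angularMode : Fin 4 → Fin 2 → ℝ[X] :=
  ![![1, X ^ 3 - C 3 * X], ![X, 1 + X ^ 2], ![X, 1 + X ^ 2], ![1, X ^ 3 - C 3 * X]]

theorem radialOp_radialMode (a : ℝ) (k : Fin 4) (r : ℝ) :
    radialOp a (-2) (fun r' => (radialMode a k).eval r') r =
      -separationConst k * (radialMode a k).eval r := by
  rw [radialOp, secondOrderOp_eval]
  fin_cases k <;>
    simp only [radialMode, separationConst, Del, Fin.zero_eta, Fin.mk_one, Fin.reduceFinMk,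
      Matrix.cons_val, derivative_add, derivative_sub, derivative_mul, derivative_X_pow,
      derivative_X, derivative_C, derivative_one, derivative_zero, eval_add, eval_sub, eval_mul,
      eval_pow, eval_X, eval_C, eval_one, eval_zero] <;>
    push_cast <;>
    ring

theorem exists_eq_sum_smul_radialMode (a : ℝ) {P : ℝ[X]} (hP : P.natDegree < 4) :
    ∃ b : Fin 4 → ℝ, P = ∑ k, b k • radialMode a k := by
  refine ⟨![P.coeff 0 + P.coeff 1 + a ^ 2 * P.coeff 2, P.coeff 1 - 3 * a ^ 2 * P.coeff 3,
    P.coeff 2 + 3 * P.coeff 3, P.coeff 3], ?_⟩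
  conv_lhs => rw [P.as_sum_range_C_mul_X_pow' hP]
  simp only [radialMode, Fin.sum_univ_four, Finset.sum_range_succ, Finset.range_zero,
    Finset.sum_empty, Matrix.cons_val, smul_eq_C_mul, map_add, map_sub, map_mul, map_pow]
  ring

theorem linearIndependent_radialMode (a : ℝ) : LinearIndependent ℝ (radialMode a) := by
  rw [Fintype.linearIndependent_iff]
  intro g hg
  rw [Fin.sum_univ_four] at hg
  have h₃ : g 3 = 0 := by
    simpa [radialMode, coeff_one, coeff_X, coeff_C, -map_pow, -map_mul]
      using congr_arg (coeff · 3) hg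
  have h₂ : g 2 = 0 := by
    simpa [radialMode, coeff_one, coeff_X, coeff_C, h₃, -map_pow] using congr_arg (coeff · 2) hg
  have h₁ : g 1 = 0 := by
    simpa [radialMode, coeff_one, h₂, h₃] using congr_arg (coeff · 1) hg
  have h₀ : g 0 = 0 := by
    simpa [radialMode, h₁, h₂, h₃] using congr_arg (coeff · 0) hg
  simp [Fin.forall_fin_succ, h₀, h₁, h₂, h₃]

theorem linearIndependent_angularMode (k : Fin 4) : LinearIndependent ℝ (angularMode k) := by
  have hzero : LinearIndependent ℝ ![(1 : ℝ[X]), X ^ 3 - C 3 * X] := by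
    refine LinearIndependent.pair_iff.mpr fun s t h => ⟨?_, ?_⟩
    · simpa using congr_arg (coeff · 0) h
    · simpa [coeff_one, coeff_X] using congr_arg (coeff · 3) h
  have htwo : LinearIndependent ℝ ![(X : ℝ[X]), 1 + X ^ 2] := by
    refine LinearIndependent.pair_iff.mpr fun s t h => ⟨?_, ?_⟩
    · simpa [coeff_one] using congr_arg (coeff · 1) h
    · simpa using congr_arg (coeff · 0) h
  exact match k with
    | 0 | 3 => hzero
    | 1 | 2 => htwo

theorem exists_eq_add_smul_of_angularOp_eq_zero {J : Set ℝ} (hJ : IsOpen J)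
    (hJ' : IsPreconnected J) (hz : ∀ z ∈ J, z ^ 2 ≠ 1) {g : ℝ → E} (hg : ContDiffOn ℝ 2 g J)
    (hode : ∀ z ∈ J, angularOp g z = 0) :
    ∃ A B : E, ∀ z ∈ J, g z = A + (z ^ 3 - 3 * z) • B := by
  have hg₁ : ∀ z ∈ J, HasDerivAt g (deriv g z) z := fun z hzJ =>
    ((hg.contDiffAt (hJ.mem_nhds hzJ)).differentiableAt two_ne_zero).hasDerivAt
  have hK : ∀ z ∈ J, HasDerivAt (fun z => (1 - z ^ 2)⁻¹ • deriv g z) 0 z := by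
    intro z hzJ
    have hw : 1 - z ^ 2 ≠ 0 := sub_ne_zero.mpr (hz z hzJ).symm
    have hg₂ := hasDerivAt_deriv_of_contDiffAt (hg.contDiffAt (hJ.mem_nhds hzJ))
    refine ((((hasDerivAt_pow 2 z).const_sub 1).fun_inv hw).fun_smul hg₂).congr_deriv ?_
    have := congr_arg (((1 - z ^ 2)⁻¹ ^ 2) • ·) (hode z hzJ)
    simp only [angularOp, secondOrderOp, smul_zero] at this
    rw [← this]
    match_scalars
    · field_simp
    · field_simp
      ring
  obtain ⟨K, hK'⟩ := exists_forall_eq_of_hasDerivAt_zero hJ hJ' hK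
  have hg' : ∀ z ∈ J, deriv g z = (1 - z ^ 2) • K := fun z hzJ => by
    rw [← hK' z hzJ, smul_inv_smul₀ (sub_ne_zero.mpr (hz z hzJ).symm)]
  have hA : ∀ z ∈ J, HasDerivAt (fun z => g z - (z - z ^ 3 / 3) • K) 0 z := by
    intro z hzJ
    have hcubic := ((hasDerivAt_id' z).fun_sub ((hasDerivAt_pow 3 z).div_const 3)).smul_const K
    refine ((hg₁ z hzJ).fun_sub hcubic).congr_deriv ?_
    rw [hg' z hzJ]
    module
  obtain ⟨A, hA'⟩ := exists_forall_eq_of_hasDerivAt_zero hJ hJ' hA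
  refine ⟨A, -(3⁻¹ : ℝ) • K, fun z hzJ => ?_⟩
  rw [← hA' z hzJ]
  module

theorem exists_eq_smul_add_smul_of_angularOp_eq_two_smul {J : Set ℝ} (hJ : IsOpen J)
    (hJ' : IsPreconnected J) (hz : ∀ z ∈ J, z ^ 2 ≠ 1) {g : ℝ → E} (hg : ContDiffOn ℝ 2 g J)
    (hode : ∀ z ∈ J, angularOp g z = (2 : ℝ) • g z) :
    ∃ A B : E, ∀ z ∈ J, g z = z • A + (1 + z ^ 2) • B := by
  have hw : ∀ z ∈ J, 1 - z ^ 2 ≠ 0 := fun z hzJ => sub_ne_zero.mpr (hz z hzJ).symm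
  have hg₁ : ∀ z ∈ J, HasDerivAt g (deriv g z) z := fun z hzJ =>
    ((hg.contDiffAt (hJ.mem_nhds hzJ)).differentiableAt two_ne_zero).hasDerivAt
  have hg₂ : ∀ z ∈ J, HasDerivAt (deriv g) (iteratedDeriv 2 g z) z := fun z hzJ =>
    hasDerivAt_deriv_of_contDiffAt (hg.contDiffAt (hJ.mem_nhds hzJ))
  have hode' : ∀ z ∈ J, (1 - z ^ 2) • iteratedDeriv 2 g z = (2 : ℝ) • (g z - z • deriv g z) := by
    intro z hzJ
    rw [smul_sub, ← hode z hzJ, angularOp, secondOrderOp]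
    module
  have hB : ∀ z ∈ J, HasDerivAt (fun z => (1 - z ^ 2)⁻¹ • (g z - z • deriv g z)) 0 z := by
    intro z hzJ
    have hdiff := (hg₁ z hzJ).fun_sub ((hasDerivAt_id' z).fun_smul (hg₂ z hzJ))
    refine ((((hasDerivAt_pow 2 z).const_sub 1).fun_inv (hw z hzJ)).fun_smul hdiff).congr_deriv ?_
    have hg'' := (eq_inv_smul_iff₀ (hw z hzJ)).mpr (hode' z hzJ)
    rw [hg'']
    have := hw z hzJ
    match_scalars <;> (field_simp; ring)
  obtain ⟨B, hB'⟩ := exists_forall_eq_of_hasDerivAt_zero hJ hJ' hB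
  have hgB : ∀ z ∈ J, g z - z • deriv g z = (1 - z ^ 2) • B := fun z hzJ => by
    rw [← hB' z hzJ, smul_inv_smul₀ (hw z hzJ)]
  have hA : ∀ z ∈ J, HasDerivAt (fun z => deriv g z - (2 * z) • B) 0 z := by
    intro z hzJ
    have hg'' : iteratedDeriv 2 g z = (2 : ℝ) • B := by
      rw [← smul_right_inj (hw z hzJ), hode' z hzJ, hgB z hzJ, smul_comm]
    refine ((hg₂ z hzJ).fun_sub (((hasDerivAt_id' z).const_mul 2).smul_const B)).congr_deriv ?_
    rw [hg'']
    module
  obtain ⟨A, hA'⟩ := exists_forall_eq_of_hasDerivAt_zero hJ hJ' hA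
  refine ⟨A, B, fun z hzJ => ?_⟩
  rw [sub_eq_iff_eq_add.mp (hgB z hzJ), sub_eq_iff_eq_add.mp (hA' z hzJ)]
  module

theorem exists_eq_sum_angularMode_smul {J : Set ℝ} (hJ : IsOpen J) (hJ' : IsPreconnected J)
    (hz : ∀ z ∈ J, z ^ 2 ≠ 1) (k : Fin 4) {g : ℝ → E} (hg : ContDiffOn ℝ 2 g J)
    (hode : ∀ z ∈ J, angularOp g z = separationConst k • g z) :
    ∃ b : Fin 2 → E, ∀ z ∈ J, g z = ∑ j, (angularMode k j).eval z • b j := by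
  match k with
  | 0 | 3 =>
    obtain ⟨A, B, h⟩ := exists_eq_add_smul_of_angularOp_eq_zero hJ hJ' hz hg
      fun z hzJ => (hode z hzJ).trans (zero_smul ℝ _)
    exact ⟨![A, B], fun z hzJ => by simp [h z hzJ, angularMode]⟩
  | 1 | 2 =>
    obtain ⟨A, B, h⟩ := exists_eq_smul_add_smul_of_angularOp_eq_two_smul hJ hJ' hz hg hode
    exact ⟨![A, B], fun z hzJ => by simp [h z hzJ, angularMode]⟩

theorem exists_eq_sum_radialMode_smul (a : ℝ) {I J : Set ℝ} (hI : IsOpen I)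
    (hI' : IsPreconnected I) (hIne : I.Nonempty) {u : ℝ → ℝ → E}
    (hu : ContDiffOn ℝ 4 (fun q : ℝ × ℝ => u q.1 q.2) (I ×ˢ J))
    (hu' : ∀ r ∈ I, ∀ z ∈ J, iteratedDeriv 4 (fun r' => u r' z) r = 0) :
    ∃ h : Fin 4 → ℝ → E, (∀ k, ContDiffOn ℝ 4 (h k) J) ∧
      ∀ r ∈ I, ∀ z ∈ J, u r z = ∑ k, (radialMode a k).eval r • h k z := by
  obtain ⟨t, htI, ht⟩ :=
    (infinite_of_mem_nhds _ (hI.mem_nhds hIne.some_mem)).exists_subset_card_eq 4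
  have hdeg : ∀ x ∈ t, (Lagrange.basis t id x).natDegree < 4 := fun x hx => by
    rw [Lagrange.natDegree_basis (Set.injOn_id _) hx, ht]
    norm_num
  choose! b hb using fun x hx => exists_eq_sum_smul_radialMode a (hdeg x hx)
  refine ⟨fun k z => ∑ x ∈ t, b x k • u x z, fun k => ?_, fun r hr z hz => ?_⟩
  · refine ContDiffOn.sum fun x hx => ContDiffOn.const_smul _ ?_
    exact hu.comp (contDiffOn_const.prodMk contDiffOn_id) fun z hz => ⟨htI hx, hz⟩
  · have hsection : ContDiffOn ℝ 4 (fun r' => u r' z) I :=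
      hu.comp (contDiffOn_id.prodMk contDiffOn_const) fun r' hr' => ⟨hr', hz⟩
    rw [eq_sum_eval_lagrangeBasis_smul_of_iteratedDeriv_eq_zero hI hI' htI
      (f := fun r' => u r' z) (by rwa [ht]) (fun r' hr' => by rw [ht]; exact hu' r' hr' z hz) hr]
    simp_rw [Finset.smul_sum]
    rw [Finset.sum_comm]
    refine Finset.sum_congr rfl fun x hx => ?_
    conv_lhs => rw [hb x hx]
    simp only [eval_finsetSum, eval_smul, Finset.sum_smul, smul_smul, smul_eq_mul, mul_comm]

theorem angularOp_eq_separationConst_smul (a : ℝ) {I J : Set ℝ} (hI : IsOpen I)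
    (hIne : I.Nonempty) (hJ : IsOpen J) {u : ℝ → ℝ → E} {h : Fin 4 → ℝ → E}
    (hh : ∀ k, ContDiffOn ℝ 2 (h k) J)
    (hu : ∀ r ∈ I, ∀ z ∈ J, u r z = ∑ k, (radialMode a k).eval r • h k z)
    (hpde : ∀ r ∈ I, ∀ z ∈ J, radialOp a (-2) (fun r' => u r' z) r + angularOp (u r) z = 0)
    (k : Fin 4) {z : ℝ} (hz : z ∈ J) :
    angularOp (h k) z = separationConst k • h k z := by
  rw [← sub_eq_zero]
  refine eq_zero_of_sum_eval_smul_eq_zero (linearIndependent_radialMode a)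
    (b := fun k => angularOp (h k) z - separationConst k • h k z)
    (infinite_of_mem_nhds _ (hI.mem_nhds hIne.some_mem)) (fun r hr => ?_) k
  have hradial : radialOp a (-2) (fun r' => u r' z) r =
      ∑ k, (-separationConst k * (radialMode a k).eval r) • h k z := by
    have hu_near : (fun r' => u r' z) =ᶠ[𝓝 r] fun r' => ∑ k, (radialMode a k).eval r' • h k z := by
      filter_upwards [hI.mem_nhds hr] with r' hr' using hu r' hr' z hz
    have hsmooth (k : Fin 4) : ContDiffAt ℝ 2 (fun r' => (radialMode a k).eval r') r :=
      ((radialMode a k).contDiff_aeval 2).contDiffAt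
    simp_rw [← radialOp_radialMode]
    rw [radialOp, secondOrderOp_congr _ _ hu_near,
      secondOrderOp_sum _ _ (f := fun k r' => (radialMode a k).eval r' • h k z)
        fun k => (hsmooth k).smul contDiffAt_const]
    exact Finset.sum_congr rfl fun k _ => secondOrderOp_smul_const _ _ (hsmooth k) _
  have hangular : angularOp (u r) z = ∑ k, (radialMode a k).eval r • angularOp (h k) z := by
    have hu_near : u r =ᶠ[𝓝 z] fun z' => ∑ k, (radialMode a k).eval r • h k z' := by
      filter_upwards [hJ.mem_nhds hz] with z' hz' using hu r hr z' hz'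
    rw [angularOp, secondOrderOp_congr _ _ hu_near,
      secondOrderOp_sum _ _ (f := fun k z' => (radialMode a k).eval r • h k z')
        fun k => contDiffAt_const.smul ((hh k).contDiffAt (hJ.mem_nhds hz))]
    exact Finset.sum_congr rfl fun k _ => secondOrderOp_const_smul _ _ _ _
  rw [← hpde r hr z hz, hradial, hangular, ← Finset.sum_add_distrib]
  exact Finset.sum_congr rfl fun k _ => by module

/-- The superposition of the separated solutions `radialMode a k · angularMode k j` with
coefficients `b k j`. -/
def modeSum (a : ℝ) (b : Fin 4 → Fin 2 → E) (r z : ℝ) : E :=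
  ∑ k, (radialMode a k).eval r • ∑ j, (angularMode k j).eval z • b k j

theorem eq_of_modeSum_eq (a : ℝ) {I J : Set ℝ} (hI : I.Infinite) (hJ : J.Infinite)
    {b b' : Fin 4 → Fin 2 → E} (h : ∀ r ∈ I, ∀ z ∈ J, modeSum a b r z = modeSum a b' r z) :
    b = b' := by
  ext k j
  rw [← sub_eq_zero]
  refine eq_zero_of_sum_eval_smul_eq_zero (linearIndependent_angularMode k)
    (b := fun j => b k j - b' k j) hJ (fun z hz => ?_) j
  refine eq_zero_of_sum_eval_smul_eq_zero (linearIndependent_radialMode a)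
    (b := fun k => ∑ j, (angularMode k j).eval z • (b k j - b' k j)) hI (fun r hr => ?_) k
  simpa only [modeSum, smul_sub, Finset.sum_sub_distrib, sub_eq_zero] using h r hr z hz

theorem existsUnique_eq_modeSum (a : ℝ) {I J : Set ℝ} (hI : IsOpen I) (hI' : IsPreconnected I)
    (hIne : I.Nonempty) (hJ : IsOpen J) (hJ' : IsPreconnected J) (hJne : J.Nonempty)
    (hz : ∀ z ∈ J, z ^ 2 ≠ 1) {u : ℝ → ℝ → E}
    (hu : ContDiffOn ℝ 4 (fun q : ℝ × ℝ => u q.1 q.2) (I ×ˢ J))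
    (hu' : ∀ r ∈ I, ∀ z ∈ J, iteratedDeriv 4 (fun r' => u r' z) r = 0)
    (hpde : ∀ r ∈ I, ∀ z ∈ J, radialOp a (-2) (fun r' => u r' z) r + angularOp (u r) z = 0) :
    ∃! b : Fin 4 → Fin 2 → E, ∀ r ∈ I, ∀ z ∈ J, u r z = modeSum a b r z := by
  obtain ⟨h, hh, hexpand⟩ := exists_eq_sum_radialMode_smul a hI hI' hIne hu hu'
  have hh₂ (k : Fin 4) : ContDiffOn ℝ 2 (h k) J := (hh k).of_le (by norm_num)
  choose b hb using fun k => exists_eq_sum_angularMode_smul hJ hJ' hz k (hh₂ k) fun z hzJ =>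
    angularOp_eq_separationConst_smul a hI hIne hJ hh₂ hexpand hpde k hzJ
  have hbu : ∀ r ∈ I, ∀ z ∈ J, u r z = modeSum a b r z := fun r hr z hzJ => by
    rw [hexpand r hr z hzJ, modeSum]
    exact Finset.sum_congr rfl fun k _ => by rw [hb k z hzJ]
  refine ⟨b, hbu, fun b' hb' => ?_⟩
  exact eq_of_modeSum_eq a (infinite_of_mem_nhds _ (hI.mem_nhds hIne.some_mem))
    (infinite_of_mem_nhds _ (hJ.mem_nhds hJne.some_mem)) fun r hr z hzJ =>
      (hb' r hr z hzJ).symm.trans (hbu r hr z hzJ)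

/-- The linear change of coordinates from the coefficients of `PhiKer` to those of its expansion
in separated solutions. -/
def modeCoeff (a : ℝ) : (Fin 8 → ℂ) ≃ (Fin 4 → Fin 2 → ℂ) where
  toFun c := ![![c 0 + c 3 + a ^ 2 * c 6, c 2], ![c 1 + 21 * a ^ 2 * c 7, c 3],
    ![c 4 - 21 * c 7, c 6], ![c 5, c 7]]
  invFun b := ![b 0 0 - b 1 1 - a ^ 2 * b 2 1, b 1 0 - 21 * a ^ 2 * b 3 1, b 0 1, b 1 1,
    b 2 0 + 21 * b 3 1, b 3 0, b 2 1, b 3 1]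
  left_inv c := by
    ext i
    fin_cases i <;> simp [sub_sub, add_assoc]
  right_inv b := by
    ext k j
    fin_cases k <;> fin_cases j <;> simp [sub_sub, add_assoc]

theorem one_sub_sq_smul_PhiKer (a : ℝ) (c : Fin 8 → ℂ) (r : ℝ) {z : ℝ} (hz : z ^ 2 ≠ 1) :
    (1 - z ^ 2) • PhiKer a c r z = modeSum a (modeCoeff a c) r z := by
  have hw : (1 - (z : ℂ) ^ 2) ≠ 0 := sub_ne_zero.mpr fun h => hz (by exact_mod_cast h.symm)
  simp only [PhiKer, Complex.real_smul, Complex.ofReal_sub, Complex.ofReal_one, Complex.ofReal_pow]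
  rw [mul_inv_cancel_left₀ hw]
  simp only [modeSum, modeCoeff, radialMode, angularMode, Equiv.coe_fn_mk, Fin.sum_univ_two,
    Fin.sum_univ_four, Matrix.cons_val, Matrix.cons_val', Matrix.cons_val_zero, Matrix.cons_val_one,
    eval_add, eval_sub, eval_mul, eval_pow, eval_one, eval_X, eval_C, Complex.real_smul]
  push_cast
  ring

end Separation

theorem SAS_kernel_classification_minus_general (a : ℝ) {I J : Set ℝ} (hI : IsOpen I)
    (hI' : IsPreconnected I) (hIne : I.Nonempty) (hJ : IsOpen J) (hJ' : IsPreconnected J)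
    (hJne : J.Nonempty) (hΔ : ∀ r ∈ I, Del a r ≠ 0) (hz : ∀ z ∈ J, z ^ 2 ≠ 1) {Φ : ℝ → ℝ → ℂ}
    (hsmooth : ContDiffOn ℝ 4 (fun q : ℝ × ℝ => Φ q.1 q.2) (I ×ˢ J))
    (hrad : ∀ q ∈ I ×ˢ J, deriv^[4] (fun r' => Φ r' q.2) q.1 = 0)
    (hteuk : ∀ q ∈ I ×ˢ J, TeukSAS a (-2) Φ q.1 q.2 = 0) :
    ∃! c : Fin 8 → ℂ, ∀ q ∈ I ×ˢ J, Φ q.1 q.2 = PhiKer a c q.1 q.2 := by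
  have hw : ContDiff ℝ 4 fun q : ℝ × ℝ => 1 - q.2 ^ 2 := by fun_prop
  have hΦr : ∀ r ∈ I, ∀ z ∈ J, ContDiffAt ℝ 2 (fun r' => Φ r' z) r := fun r hr z hzJ =>
    ((hsmooth.contDiffAt ((hI.prod hJ).mem_nhds ⟨hr, hzJ⟩)).comp r
      (contDiffAt_id.prodMk contDiffAt_const)).of_le (by norm_num)
  have hΦz : ∀ r ∈ I, ∀ z ∈ J, ContDiffAt ℝ 2 (Φ r) z := fun r hr z hzJ =>
    ((hsmooth.contDiffAt ((hI.prod hJ).mem_nhds ⟨hr, hzJ⟩)).comp z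
      (contDiffAt_const.prodMk contDiffAt_id)).of_le (by norm_num)
  have hmodes := existsUnique_eq_modeSum a hI hI' hIne hJ hJ' hJne hz
    (u := fun r z => (1 - z ^ 2) • Φ r z) (hw.contDiffOn.smul hsmooth)
    (fun r hr z hzJ => by
      rw [iteratedDeriv_fun_const_smul_field, iteratedDeriv_eq_iterate, hrad (r, z) ⟨hr, hzJ⟩,
        smul_zero])
    (fun r hr z hzJ => by
      rw [← one_sub_sq_smul_TeukSAS (hΔ r hr) (hz z hzJ) (hΦr r hr z hzJ) (hΦz r hr z hzJ),
        hteuk (r, z) ⟨hr, hzJ⟩, smul_zero])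
  refine ((modeCoeff a).existsUnique_congr fun c => ?_).mpr hmodes
  rw [Set.forall_prod_set]
  refine forall₄_congr fun r _ z hzJ => ?_
  rw [← one_sub_sq_smul_PhiKer a c r (hz z hzJ), smul_right_inj (sub_ne_zero.mpr (hz z hzJ).symm)]

/-- **Classification of the stationary axisymmetric kernel (`s = −2`).**  Every smooth joint
solution of `∂_r⁴ Φ = 0` and `𝒯₋₂ Φ = 0` on `U` is `Φ_Ker(c)` for a unique `c ∈ ℂ⁸`. -/
theorem SAS_kernel_classification_minus (a : ℝ) (ha : |a| < 1) (Φ : ℝ → ℝ → ℂ)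
    (hsmooth : ContDiffOn ℝ (⊤ : ℕ∞) (fun q : ℝ × ℝ => Φ q.1 q.2) (U2 a))
    (hrad : ∀ q ∈ U2 a, deriv^[4] (fun r' => Φ r' q.2) q.1 = 0)
    (hteuk : ∀ q ∈ U2 a, TeukSAS a (-2) Φ q.1 q.2 = 0) :
    ∃! c : Fin 8 → ℂ, ∀ q ∈ U2 a, Φ q.1 q.2 = PhiKer a c q.1 q.2 :=
  SAS_kernel_classification_minus_general a isOpen_Ioi isPreconnected_Ioi nonempty_Ioi isOpen_Ioo
    isPreconnected_Ioo (nonempty_Ioo.mpr (by norm_num)) (fun _ hr => (Del_pos hr).ne')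
    (fun _ hz => (sq_lt_one_iff_abs_lt_one _).mpr (abs_lt.mpr hz) |>.ne)
    (contDiffOn_infty.mp hsmooth 4) hrad hteuk

end Kerr
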